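/- Let d ≥ 1, M ≥ 1, and let f_1, …, f_M : ℝ^d → ℝ be differentiable functions, each bounded above, with f_c^* = sup_{θ'} f_c(θ'). Define F = (1/M)·Σ_{c=1}^M f_c and F^* = sup_{θ'} F(θ'). Fix θ ∈ ℝ^d, ζ ≥ 0 and nonnegative constants μ_1, …, μ_M. If for every c ∈ {1,…,M} one has ‖∇f_c(θ)‖₂² ≥ 2·μ_c·(f_c^* − f_c(θ)) and ‖∇F(θ) − ∇f_c(θ)‖₂² ≤ ζ², then ζ² + ‖∇F(θ)‖₂² ≥ 2·(min_c μ_c)·(F^* − F(θ)). -/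

import Mathlib

open scoped BigOperators

/-!
The mean square of vectors is the square of their mean plus their variance. Applied to the local
gradients `∇f_c(θ)`, whose mean is `∇F(θ)`, this gives
`avg_c ‖∇f_c(θ)‖² = ‖∇F(θ)‖² + avg_c ‖∇F(θ) - ∇f_c(θ)‖² ≤ ‖∇F(θ)‖² + ζ²`. The local inequalities
bound the left side below by `2 m · avg_c (f_c^* - f_c(θ))` with `m = min_c μ_c`, and
`F^* ≤ avg_c f_c^*` since a supremum of a mean is at most the mean of the suprema.
-/

section SuboptimalityGap

variable {α ι : Type*} [Fintype ι]

/-- The suboptimality gap `f^* - f x` of a maximization problem, where `f^* = sup f`. As a supremum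
in `ℝ`, `f^*` has the junk value `0` when `f` is not bounded above. -/
noncomputable def suboptimalityGap (f : α → ℝ) (x : α) : ℝ :=
  sSup (Set.range f) - f x

theorem suboptimalityGap_nonneg {f : α → ℝ} (hf : BddAbove (Set.range f)) (x : α) :
    0 ≤ suboptimalityGap f x :=
  sub_nonneg.2 (le_csSup hf (Set.mem_range_self x))

variable {f : ι → α → ℝ} {w : ι → ℝ}

theorem sum_mul_le_sum_mul_sSup_range (hw : ∀ i, 0 ≤ w i)
    (hf : ∀ i, BddAbove (Set.range (f i))) (x : α) :
    ∑ i, w i * f i x ≤ ∑ i, w i * sSup (Set.range (f i)) :=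
  Finset.sum_le_sum fun i _ =>
    mul_le_mul_of_nonneg_left (le_csSup (hf i) (Set.mem_range_self x)) (hw i)

theorem bddAbove_range_sum_mul (hw : ∀ i, 0 ≤ w i) (hf : ∀ i, BddAbove (Set.range (f i))) :
    BddAbove (Set.range fun x => ∑ i, w i * f i x) :=
  ⟨_, Set.forall_mem_range.2 (sum_mul_le_sum_mul_sSup_range hw hf)⟩

theorem suboptimalityGap_sum_mul_le (hw : ∀ i, 0 ≤ w i)
    (hf : ∀ i, BddAbove (Set.range (f i))) (x : α) :
    suboptimalityGap (fun y => ∑ i, w i * f i y) x ≤ ∑ i, w i * suboptimalityGap (f i) x := by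
  have : Nonempty α := ⟨x⟩
  have hsup : sSup (Set.range fun y => ∑ i, w i * f i y) ≤ ∑ i, w i * sSup (Set.range (f i)) :=
    ciSup_le (sum_mul_le_sum_mul_sSup_range hw hf)
  simpa only [suboptimalityGap, mul_sub, Finset.sum_sub_distrib] using
    sub_le_sub_right hsup (∑ i, w i * f i x)

end SuboptimalityGap

section InnerProductSpace

variable {E ι : Type*} [NormedAddCommGroup E] [InnerProductSpace ℝ E] [Fintype ι] {w : ι → ℝ}

theorem sum_mul_norm_sq_eq_norm_sq_add (hw : ∑ i, w i = 1) (v : ι → E) :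
    ∑ i, w i * ‖v i‖ ^ 2 =
      ‖∑ i, w i • v i‖ ^ 2 + ∑ i, w i * ‖(∑ j, w j • v j) - v i‖ ^ 2 := by
  set c := ∑ j, w j • v j with hc
  have hinner : ∑ i, w i * inner ℝ c (v i) = ‖c‖ ^ 2 := by
    simp only [← real_inner_smul_right, ← inner_sum, ← hc, real_inner_self_eq_norm_sq]
  calc ∑ i, w i * ‖v i‖ ^ 2
      = ∑ i, (w i * ‖c - v i‖ ^ 2 + 2 * (w i * inner ℝ c (v i)) - w i * ‖c‖ ^ 2) :=
        Finset.sum_congr rfl fun i _ => by rw [norm_sub_sq_real]; ring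
    _ = ∑ i, w i * ‖c - v i‖ ^ 2 + 2 * ‖c‖ ^ 2 - ‖c‖ ^ 2 := by
        rw [Finset.sum_sub_distrib, Finset.sum_add_distrib, ← Finset.mul_sum, ← Finset.sum_mul,
          hinner, hw, one_mul]
    _ = ‖c‖ ^ 2 + ∑ i, w i * ‖c - v i‖ ^ 2 := by ring

variable [CompleteSpace E] {f : ι → E → ℝ} {θ : E}

theorem gradient_sum_mul (w : ι → ℝ) (hf : ∀ i, DifferentiableAt ℝ (f i) θ) :
    gradient (fun x => ∑ i, w i * f i x) θ = ∑ i, w i • gradient (f i) θ := by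
  refine HasGradientAt.gradient (hasGradientAt_iff_hasFDerivAt.2 ?_)
  simpa only [map_sum, map_smul] using
    HasFDerivAt.fun_sum fun i (_ : i ∈ Finset.univ) =>
      (hf i).hasGradientAt.hasFDerivAt.const_mul (w i)

theorem sum_mul_norm_gradient_sq (hw : ∑ i, w i = 1) (hf : ∀ i, DifferentiableAt ℝ (f i) θ) :
    ∑ i, w i * ‖gradient (f i) θ‖ ^ 2 =
      ‖gradient (fun x => ∑ i, w i * f i x) θ‖ ^ 2 +
        ∑ i, w i * ‖gradient (fun x => ∑ j, w j * f j x) θ - gradient (f i) θ‖ ^ 2 := by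
  rw [gradient_sum_mul w hf]
  exact sum_mul_norm_sq_eq_norm_sq_add hw _

theorem stmt2_general {μ : ι → ℝ} {m ζ : ℝ} (hw₀ : ∀ i, 0 ≤ w i) (hw₁ : ∑ i, w i = 1)
    (hdiff : ∀ i, DifferentiableAt ℝ (f i) θ) (hbdd : ∀ i, BddAbove (Set.range (f i)))
    (hm : ∀ i, m ≤ μ i)
    (hPL : ∀ i, 2 * μ i * suboptimalityGap (f i) θ ≤ ‖gradient (f i) θ‖ ^ 2)
    (hhet : ∑ i, w i * ‖gradient (fun x => ∑ j, w j * f j x) θ - gradient (f i) θ‖ ^ 2 ≤ ζ ^ 2) :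
    2 * m * suboptimalityGap (fun x => ∑ i, w i * f i x) θ ≤
      ζ ^ 2 + ‖gradient (fun x => ∑ i, w i * f i x) θ‖ ^ 2 := by
  rcases lt_or_ge m 0 with hneg | hnonneg
  · have hgap := suboptimalityGap_nonneg (bddAbove_range_sum_mul hw₀ hbdd) θ
    exact (mul_nonpos_of_nonpos_of_nonneg (by linarith) hgap).trans (by positivity)
  have hlocal (i : ι) : 2 * m * suboptimalityGap (f i) θ ≤ ‖gradient (f i) θ‖ ^ 2 := by
    have hgap := suboptimalityGap_nonneg (hbdd i) θ
    exact le_trans (by gcongr; exact hm i) (hPL i)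
  calc 2 * m * suboptimalityGap (fun x => ∑ i, w i * f i x) θ
      ≤ 2 * m * ∑ i, w i * suboptimalityGap (f i) θ := by
        gcongr
        exact suboptimalityGap_sum_mul_le hw₀ hbdd θ
    _ = ∑ i, w i * (2 * m * suboptimalityGap (f i) θ) := by
        simp only [Finset.mul_sum, mul_left_comm]
    _ ≤ ∑ i, w i * ‖gradient (f i) θ‖ ^ 2 :=
        Finset.sum_le_sum fun i _ => mul_le_mul_of_nonneg_left (hlocal i) (hw₀ i)
    _ ≤ ζ ^ 2 + ‖gradient (fun x => ∑ i, w i * f i x) θ‖ ^ 2 := by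
        rw [sum_mul_norm_gradient_sq hw₁ hdiff, add_comm]
        gcongr

end InnerProductSpace

/-- Relaxed non-uniform Polyak–Łojasiewicz inequality (linear gap) for the
average of `M` local objectives under bounded gradient heterogeneity. -/
theorem stmt2 (d M : ℕ) (hd : 1 ≤ d) (hM : 1 ≤ M)
    (f : Fin M → EuclideanSpace ℝ (Fin d) → ℝ)
    (hdiff : ∀ c, Differentiable ℝ (f c))
    (hbdd : ∀ c, BddAbove (Set.range (f c)))
    (θ : EuclideanSpace ℝ (Fin d)) (ζ : ℝ) (hζ : 0 ≤ ζ)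
    (μ : Fin M → ℝ) (hμ : ∀ c, 0 ≤ μ c)
    (hPL : ∀ c, ‖gradient (f c) θ‖ ^ 2 ≥
      2 * μ c * (sSup (Set.range (f c)) - f c θ))
    (hhet : ∀ c,
      ‖gradient (fun x => (1 / (M : ℝ)) * ∑ c', f c' x) θ - gradient (f c) θ‖ ^ 2 ≤ ζ ^ 2) :
    ζ ^ 2 + ‖gradient (fun x => (1 / (M : ℝ)) * ∑ c', f c' x) θ‖ ^ 2 ≥
      2 * (Finset.univ.inf' ⟨⟨0, hM⟩, Finset.mem_univ _⟩ μ) *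
        (sSup (Set.range (fun x => (1 / (M : ℝ)) * ∑ c', f c' x)) -
          (1 / (M : ℝ)) * ∑ c', f c' θ) := by
  have hw₀ : ∀ _ : Fin M, 0 ≤ 1 / (M : ℝ) := fun _ => by positivity
  have hw₁ : ∑ _ : Fin M, 1 / (M : ℝ) = 1 := by simp [Nat.ne_of_gt hM]
  simp only [Finset.mul_sum] at hhet ⊢
  exact stmt2_general hw₀ hw₁ (fun c => hdiff c θ) hbdd
    (fun c => Finset.inf'_le μ (Finset.mem_univ c)) hPL
    ((convex_Iic (ζ ^ 2)).sum_mem (fun c _ => hw₀ c) hw₁ fun c _ => hhet c)
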